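/- Let a, a', b > 0. If X ~ μ_{a,a',b} and W ~ β²_{b,a'} are independent real random variables, then 1/(1 + X·W) has distribution μ_{a',a,b}. -/

import Mathlib

open MeasureTheory ProbabilityTheory Real Set Filter Topology

noncomputable def gammaDens (p σ y : ℝ) : ℝ :=
  if 0 < y then σ ^ p / Real.Gamma p * Real.exp (-(σ * y)) * y ^ (p - 1) else 0

noncomputable def gammaM (p σ : ℝ) : Measure ℝ :=
  MeasureTheory.volume.withDensity fun y => ENNReal.ofReal (gammaDens p σ y)

noncomputable def beta1Dens (p q x : ℝ) : ℝ :=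
  if 0 < x ∧ x < 1 then
    Real.Gamma (p + q) / (Real.Gamma p * Real.Gamma q) * x ^ (p - 1) * (1 - x) ^ (q - 1)
  else 0

noncomputable def beta1 (p q : ℝ) : Measure ℝ :=
  MeasureTheory.volume.withDensity fun x => ENNReal.ofReal (beta1Dens p q x)

noncomputable def beta2Dens (p q y : ℝ) : ℝ :=
  if 0 < y then
    Real.Gamma (p + q) / (Real.Gamma p * Real.Gamma q) * y ^ (p - 1) * (1 + y) ^ (-(p + q))
  else 0

noncomputable def beta2 (p q : ℝ) : Measure ℝ :=
  MeasureTheory.volume.withDensity fun y => ENNReal.ofReal (beta2Dens p q y)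

/-- Pochhammer (rising factorial) symbol `(a)_n`. -/
noncomputable def poch (a : ℝ) (n : ℕ) : ℝ := ∏ i ∈ Finset.range n, (a + (i : ℝ))

/-- Gauss hypergeometric function `₂F₁(a,b;c;x)`. -/
noncomputable def F21 (a b c x : ℝ) : ℝ :=
  ∑' n : ℕ, poch a n * poch b n / ((n.factorial : ℝ) * poch c n) * x ^ n

/-- Generalized hypergeometric `₃F₂(a₁,a₂,a₃;b₁,b₂;1)` at unit argument. -/
noncomputable def F32one (a1 a2 a3 b1 b2 : ℝ) : ℝ :=
  ∑' n : ℕ, poch a1 n * poch a2 n * poch a3 n /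
    ((n.factorial : ℝ) * poch b1 n * poch b2 n)

/-- Normalizing constant of the real beta-hypergeometric distribution. -/
noncomputable def Cbh (a a' b : ℝ) : ℝ :=
  Real.Gamma (a + b) / (Real.Gamma a * Real.Gamma b * F32one a a b (a + b) (a + a'))

noncomputable def bhDens (a a' b x : ℝ) : ℝ :=
  if 0 < x ∧ x < 1 then
    Cbh a a' b * x ^ (a - 1) * (1 - x) ^ (b - 1) * F21 a b (a + a') x
  else 0

/-- The real beta-hypergeometric distribution `μ_{a,a',b}`. -/
noncomputable def bhMeasure (a a' b : ℝ) : Measure ℝ :=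
  MeasureTheory.volume.withDensity fun x => ENNReal.ofReal (bhDens a a' b x)

/-! For fixed `x > 0`, the variable `1 / (1 + x * W)` has an explicit density on `(0, 1)`.
Integrating it over `x` against the unnormalized beta-hypergeometric weight
`x ^ (a - 1) * (1 - x) ^ (b - 1) * ₂F₁(a, b; a + a'; x)` leads to an integral with the extra factor
`(1 - v * (1 - x)) ^ (-(a' + b))`; expanding this factor in its binomial series and summing each
term by Gauss's theorem yields exactly the weight with `a` and `a'` exchanged. So the map
`(x, w) ↦ 1 / (1 + x * w)` carries one unnormalized measure to the other. As the law of `W` has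
total mass `1`, the two weights have the same total mass, and normalizing them gives the two
distributions. -/

lemma poch_eq_ascPochhammer_eval (s : ℝ) (n : ℕ) : poch s n = (ascPochhammer ℝ n).eval s := by
  induction n with
  | zero => simp [poch]
  | succ n ih => rw [ascPochhammer_succ_eval, ← ih, poch, Finset.prod_range_succ, poch]

lemma poch_pos {s : ℝ} (hs : 0 < s) (n : ℕ) : 0 < poch s n :=
  Finset.prod_pos fun _ _ => by positivity

lemma Gamma_add_natCast {s : ℝ} (hs : 0 < s) (n : ℕ) :
    Gamma (s + n) = poch s n * Gamma s := by
  induction n with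
  | zero => simp [poch]
  | succ n ih =>
    rw [Nat.cast_succ, ← add_assoc, Gamma_add_one (by positivity), ih, poch, poch,
      Finset.prod_range_succ]
    ring

lemma beta_comm (p q : ℝ) : beta p q = beta q p := by
  rw [beta, beta, mul_comm, add_comm]

lemma beta_add_natCast {p q : ℝ} (hp : 0 < p) (hpq : 0 < p + q) (n : ℕ) :
    beta (p + n) q = poch p n / poch (p + q) n * beta p q := by
  rw [beta, beta, add_right_comm, Gamma_add_natCast hp, Gamma_add_natCast hpq]
  ring

lemma ringChoose_add_natCast_sub_one (s : ℝ) (n : ℕ) :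
    Ring.choose (s + n - 1) n = poch s n / n.factorial := by
  rw [← Ring.multichoose_eq, eq_div_iff (by positivity), poch_eq_ascPochhammer_eval,
    ← Polynomial.ascPochhammer_smeval_eq_eval, ← Ring.factorial_nsmul_multichoose_eq_ascPochhammer,
    nsmul_eq_mul, mul_comm]

lemma hasSum_poch_div_factorial_mul_pow (s : ℝ) {t : ℝ} (ht : |t| < 1) :
    HasSum (fun n : ℕ => poch s n / n.factorial * t ^ n) ((1 - t) ^ (-s)) := by
  have h := (one_div_one_sub_rpow_hasFPowerSeriesOnBall_zero s).hasSum (y := t)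
    (by simpa [enorm_eq_nnnorm, ← NNReal.coe_lt_coe] using ht)
  simpa only [FormalMultilinearSeries.ofScalars_apply_eq, ringChoose_add_natCast_sub_one, zero_add,
    smul_eq_mul, one_div, ← rpow_neg (sub_nonneg.2 (lt_of_abs_lt ht).le)] using h

/-- The coefficient `(a)ₙ (b)ₙ / (n! (c)ₙ)` of `xⁿ` in the series `F21 a b c x`. -/
noncomputable def hypergeomCoeff (a b c : ℝ) (n : ℕ) : ℝ :=
  poch a n * poch b n / ((n.factorial : ℝ) * poch c n)

section HypergeomCoeff

variable {a b c : ℝ}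

lemma hypergeomCoeff_comm (a b c : ℝ) : hypergeomCoeff a b c = hypergeomCoeff b a c := by
  funext n
  rw [hypergeomCoeff, hypergeomCoeff, mul_comm (poch a n)]

lemma hypergeomCoeff_pos (ha : 0 < a) (hb : 0 < b) (hc : 0 < c) (n : ℕ) :
    0 < hypergeomCoeff a b c n :=
  div_pos (mul_pos (poch_pos ha n) (poch_pos hb n))
    (mul_pos (by positivity) (poch_pos hc n))

lemma hypergeomCoeff_mul_beta {q : ℝ} (hc : 0 < c) (hcq : 0 < c + q) (n : ℕ) :
    hypergeomCoeff a b c n * beta (c + n) q = beta c q * hypergeomCoeff a b (c + q) n := by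
  have := (poch_pos hc n).ne'
  rw [beta_add_natCast hc hcq, hypergeomCoeff, hypergeomCoeff]
  field_simp

lemma F21_comm (a b c : ℝ) : F21 a b c = F21 b a c := by
  funext x
  exact tsum_congr fun n => congrArg (· * x ^ n) (congrFun (hypergeomCoeff_comm a b c) n)

@[fun_prop]
lemma measurable_F21 (a b c : ℝ) : Measurable (F21 a b c) := by
  unfold F21
  fun_prop

lemma hasSum_F21 {x : ℝ} (ha : 0 < a) (hb : 0 < b) (hc : 0 < c) (hx : |x| < 1) :
    HasSum (fun n => hypergeomCoeff a b c n * x ^ n) (F21 a b c x) := by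
  refine Summable.hasSum ?_
  have hradius : (ordinaryHypergeometricSeries ℝ a b c).radius = 1 :=
    ordinaryHypergeometricSeries_radius_eq_one (𝔸 := ℝ) a b c fun k => by
      have : (0 : ℝ) ≤ k := k.cast_nonneg
      refine ⟨?_, ?_, ?_⟩ <;> linarith
  have hx' : x ∈ Metric.eball 0 (ordinaryHypergeometricSeries ℝ a b c).radius := by
    simpa [hradius, enorm_eq_nnnorm, ← NNReal.coe_lt_coe] using hx
  refine ((ordinaryHypergeometricSeries ℝ a b c).summable hx').congr fun n => ?_
  rw [ordinaryHypergeometricSeries_apply_eq, hypergeomCoeff, smul_eq_mul]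
  simp only [poch_eq_ascPochhammer_eval]
  ring

lemma F21_nonneg {x : ℝ} (ha : 0 < a) (hb : 0 < b) (hc : 0 < c) (hx : 0 ≤ x) :
    0 ≤ F21 a b c x :=
  tsum_nonneg fun n => mul_nonneg (hypergeomCoeff_pos ha hb hc n).le (pow_nonneg hx n)

lemma monotoneOn_F21 (ha : 0 < a) (hb : 0 < b) (hc : 0 < c) :
    MonotoneOn (F21 a b c) (Ico 0 1) := by
  have hsum {x : ℝ} (hx : x ∈ Ico (0 : ℝ) 1) :=
    hasSum_F21 ha hb hc (abs_lt.2 ⟨by linarith [hx.1], hx.2⟩)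
  exact fun x hx y hy hxy => hasSum_le
    (fun n => mul_le_mul_of_nonneg_left (pow_le_pow_left₀ hx.1 hxy n)
      (hypergeomCoeff_pos ha hb hc n).le) (hsum hx) (hsum hy)

end HypergeomCoeff

lemma hasSum_of_tsum_ofReal_eq {ι : Type*} {f : ι → ℝ} {r : ℝ} (hf : ∀ i, 0 ≤ f i) (hr : 0 ≤ r)
    (h : ∑' i, ENNReal.ofReal (f i) = ENNReal.ofReal r) : HasSum f r := by
  have hsum := ENNReal.hasSum_toReal (f := fun i => ENNReal.ofReal (f i))
    (h ▸ ENNReal.ofReal_ne_top)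
  rw [← ENNReal.tsum_toReal_eq fun _ => ENNReal.ofReal_ne_top, h] at hsum
  simpa only [ENNReal.toReal_ofReal hr, ENNReal.toReal_ofReal (hf _)] using hsum

lemma setLIntegral_ofReal_eq_tsum {α ι : Type*} [MeasurableSpace α] [Countable ι] {ν : Measure α}
    {s : Set α} (hs : MeasurableSet s) {f : ι → α → ℝ} {g : α → ℝ} (hf : ∀ i, Measurable (f i))
    (hf0 : ∀ x ∈ s, ∀ i, 0 ≤ f i x) (hfg : ∀ x ∈ s, HasSum (f · x) (g x)) :
    ∫⁻ x in s, ENNReal.ofReal (g x) ∂ν = ∑' i, ∫⁻ x in s, ENNReal.ofReal (f i x) ∂ν := by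
  rw [← lintegral_tsum fun i => (hf i).ennreal_ofReal.aemeasurable]
  refine setLIntegral_congr_fun hs fun x hx => ?_
  rw [← (hfg x hx).tsum_eq, ENNReal.ofReal_tsum_of_nonneg (hf0 x hx) (hfg x hx).summable]

lemma lintegral_rpow_mul_one_sub_rpow {p q : ℝ} (hp : 0 < p) (hq : 0 < q) :
    ∫⁻ x in Ioo (0 : ℝ) 1, ENNReal.ofReal (x ^ (p - 1) * (1 - x) ^ (q - 1)) =
      ENNReal.ofReal (beta p q) := by
  have hB := beta_pos hp hq
  have h := lintegral_betaPDF_eq_one hp hq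
  simp_rw [lintegral_betaPDF, mul_assoc, ENNReal.ofReal_mul (one_div_pos.2 hB).le] at h
  rw [lintegral_const_mul _ (by fun_prop), mul_comm] at h
  rw [ENNReal.eq_inv_of_mul_eq_one_left h, ← ENNReal.ofReal_inv_of_pos (one_div_pos.2 hB), one_div,
    inv_inv]

lemma lintegral_rpow_mul_one_sub_rpow_mul_powerSeries {p q : ℝ} (hp : 0 < p) (hq : 0 < q)
    {c : ℕ → ℝ} (hc : ∀ n, 0 ≤ c n) {f : ℝ → ℝ}
    (hf : ∀ x ∈ Ioo (0 : ℝ) 1, HasSum (fun n => c n * x ^ n) (f x)) :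
    ∫⁻ x in Ioo (0 : ℝ) 1, ENNReal.ofReal (x ^ (p - 1) * (1 - x) ^ (q - 1) * f x) =
      ∑' n : ℕ, ENNReal.ofReal (c n * beta (p + n) q) := by
  rw [setLIntegral_ofReal_eq_tsum measurableSet_Ioo
    (f := fun n x => c n * (x ^ (p + n - 1) * (1 - x) ^ (q - 1)))]
  · refine tsum_congr fun n => ?_
    simp_rw [ENNReal.ofReal_mul (hc n)]
    rw [lintegral_const_mul _ (by fun_prop),
      lintegral_rpow_mul_one_sub_rpow (by positivity) hq]
  · exact fun n => by fun_prop
  · rintro x ⟨hx0, hx1⟩ n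
    have := sub_pos.2 hx1
    have := hc n
    positivity
  · intro x hx
    refine ((hf x hx).mul_left (x ^ (p - 1) * (1 - x) ^ (q - 1))).congr_fun fun n => ?_
    rw [add_sub_right_comm, rpow_add hx.1, rpow_natCast]
    ring

/-- Gauss's summation theorem. Both sides evaluate the integral over `(0, 1)` of
`x ^ (b - 1) * (1 - x) ^ (d - b - 1) * (1 - x) ^ (-a)`: expand the last factor in its binomial
series, or merge it with the middle one. -/
theorem hasSum_hypergeomCoeff {a b d : ℝ} (ha : 0 < a) (hb : 0 < b) (habd : a + b < d) :
    HasSum (hypergeomCoeff a b d)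
      (Gamma d * Gamma (d - a - b) / (Gamma (d - a) * Gamma (d - b))) := by
  have hd : 0 < d := by linarith
  have hdb : 0 < d - b := by linarith
  have hdba : 0 < d - b - a := by linarith
  have hsum : HasSum (fun n : ℕ => poch a n / n.factorial * beta (b + n) (d - b))
      (beta b (d - b - a)) := by
    refine hasSum_of_tsum_ofReal_eq (fun n => mul_nonneg
      (div_nonneg (poch_pos ha n).le (by positivity)) (beta_pos (by positivity) hdb).le)
      (beta_pos hb hdba).le ?_
    rw [← lintegral_rpow_mul_one_sub_rpow_mul_powerSeries hb hdb
        (fun n => div_nonneg (poch_pos ha n).le (by positivity)) fun x hx =>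
        hasSum_poch_div_factorial_mul_pow a (abs_lt.2 ⟨by linarith [hx.1], hx.2⟩),
      ← lintegral_rpow_mul_one_sub_rpow hb hdba]
    refine setLIntegral_congr_fun measurableSet_Ioo fun x hx => ?_
    rw [mul_assoc, ← rpow_add (sub_pos.2 hx.2), sub_right_comm _ a, sub_eq_add_neg _ a]
  have hcoeff (n : ℕ) : hypergeomCoeff a b d n =
      poch a n / n.factorial * beta (b + n) (d - b) / beta b (d - b) := by
    have hB := (beta_pos hb hdb).ne'
    rw [beta_add_natCast hb (by linarith), add_sub_cancel, hypergeomCoeff]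
    field_simp
  have hvalue : Gamma d * Gamma (d - a - b) / (Gamma (d - a) * Gamma (d - b)) =
      beta b (d - b - a) / beta b (d - b) := by
    have := (Gamma_pos_of_pos hb).ne'
    have := (Gamma_pos_of_pos hd).ne'
    rw [beta, beta, add_sub_cancel, show b + (d - b - a) = d - a by ring, sub_right_comm d a b]
    field_simp
  rw [funext hcoeff, hvalue]
  exact hsum.div_const _

lemma F21_one {a b d : ℝ} (ha : 0 < a) (hb : 0 < b) (habd : a + b < d) :
    F21 a b d 1 = Gamma d * Gamma (d - a - b) / (Gamma (d - a) * Gamma (d - b)) := by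
  rw [← (hasSum_hypergeomCoeff ha hb habd).tsum_eq]
  exact tsum_congr fun n => by rw [one_pow, mul_one, hypergeomCoeff]

section IntegralTransforms

variable {a b c q : ℝ}

lemma lintegral_rpow_mul_one_sub_rpow_mul_F21 (ha : 0 < a) (hb : 0 < b) (hc : 0 < c) (hq : 0 < q)
    (h : a + b < c + q) :
    ∫⁻ x in Ioo (0 : ℝ) 1, ENNReal.ofReal (x ^ (c - 1) * (1 - x) ^ (q - 1) * F21 a b c x) =
      ENNReal.ofReal (beta c q * F21 a b (c + q) 1) := by
  have hnonneg (n : ℕ) : 0 ≤ beta c q * hypergeomCoeff a b (c + q) n :=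
    mul_nonneg (beta_pos hc hq).le (hypergeomCoeff_pos ha hb (by positivity) n).le
  have hsum := (hasSum_hypergeomCoeff ha hb h).mul_left (beta c q)
  rw [lintegral_rpow_mul_one_sub_rpow_mul_powerSeries hc hq
    (fun n => (hypergeomCoeff_pos ha hb hc n).le)
    fun x hx => hasSum_F21 ha hb hc (abs_lt.2 ⟨by linarith [hx.1], hx.2⟩)]
  simp_rw [hypergeomCoeff_mul_beta hc (add_pos hc hq)]
  rw [← ENNReal.ofReal_tsum_of_nonneg hnonneg hsum.summable, hsum.tsum_eq, F21_one ha hb h]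

lemma poch_mul_beta_mul_F21_one (ha : 0 < a) (hb : 0 < b) (hq : 0 < q)
    (h : a + b < c + q) (m : ℕ) :
    poch (c + q - a) m / m.factorial * (beta c (q + m) * F21 a b (c + (q + m)) 1) =
      beta c q * F21 a b (c + q) 1 * hypergeomCoeff q (c + q - a - b) (c + q - b) m := by
  have hcq : 0 < c + q := by linarith
  have hca : 0 < c + q - a := by linarith
  have hcb : 0 < c + q - b := by linarith
  have hcab : 0 < c + q - a - b := by linarith
  have hΓa := (Gamma_pos_of_pos hca).ne'
  have hΓb := (Gamma_pos_of_pos hcb).ne'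
  have hΓcq := (Gamma_pos_of_pos hcq).ne'
  have hpa := (poch_pos hca m).ne'
  have hpb := (poch_pos hcb m).ne'
  have hpcq := (poch_pos hcq m).ne'
  rw [F21_one ha hb h, F21_one ha hb (by linarith [(m.cast_nonneg : (0 : ℝ) ≤ m)]), beta,
    beta, hypergeomCoeff, ← add_assoc c q,
    show c + q + m - a - b = c + q - a - b + m by ring,
    show c + q + m - a = c + q - a + m by ring, show c + q + m - b = c + q - b + m by ring,
    Gamma_add_natCast hq, Gamma_add_natCast hcq, Gamma_add_natCast hca, Gamma_add_natCast hcb,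
    Gamma_add_natCast hcab]
  field_simp

lemma one_sub_mul_one_sub_pos {v x : ℝ} (hv : v ∈ Ioo (0 : ℝ) 1) (hx : 0 < x) :
    0 < 1 - v * (1 - x) := by
  nlinarith [hv.2, mul_pos hv.1 hx]

/-- Expanding the last factor in its binomial series turns the integral into a series of Gauss sums,
and the exponent `-(c + q - a)` is the one for which this series is again of type `₂F₁`. -/
theorem lintegral_rpow_mul_one_sub_rpow_mul_F21_mul_rpow (ha : 0 < a) (hb : 0 < b) (hc : 0 < c)
    (hq : 0 < q) (h : a + b < c + q) {v : ℝ} (hv : v ∈ Ioo (0 : ℝ) 1) :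
    ∫⁻ x in Ioo (0 : ℝ) 1, ENNReal.ofReal
        (x ^ (c - 1) * (1 - x) ^ (q - 1) * F21 a b c x * (1 - v * (1 - x)) ^ (-(c + q - a))) =
      ENNReal.ofReal
        (beta c q * F21 a b (c + q) 1 * F21 q (c + q - a - b) (c + q - b) v) := by
  have hca : 0 < c + q - a := by linarith
  have hcb : 0 < c + q - b := by linarith
  have hcab : 0 < c + q - a - b := by linarith
  have hbinom (m : ℕ) : 0 ≤ poch (c + q - a) m / m.factorial * v ^ m :=
    mul_nonneg (div_nonneg (poch_pos hca m).le (by positivity)) (pow_nonneg hv.1.le m)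
  rw [setLIntegral_ofReal_eq_tsum measurableSet_Ioo (f := fun m x =>
    poch (c + q - a) m / m.factorial * v ^ m *
      (x ^ (c - 1) * (1 - x) ^ (q + m - 1) * F21 a b c x))]
  · have hsum := (hasSum_F21 hq hcab hcb
      (abs_lt.2 ⟨by linarith [hv.1], hv.2⟩)).mul_left (beta c q * F21 a b (c + q) 1)
    have hK : 0 ≤ beta c q * F21 a b (c + q) 1 :=
      mul_nonneg (beta_pos hc hq).le (F21_nonneg ha hb (by positivity) zero_le_one)
    rw [← hsum.tsum_eq, ENNReal.ofReal_tsum_of_nonneg (fun m => mul_nonneg hK (mul_nonneg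
      (hypergeomCoeff_pos hq hcab hcb m).le (pow_nonneg hv.1.le m))) hsum.summable]
    refine tsum_congr fun m => ?_
    simp_rw [ENNReal.ofReal_mul (hbinom m)]
    rw [lintegral_const_mul _ (by fun_prop), lintegral_rpow_mul_one_sub_rpow_mul_F21 ha hb hc
      (by positivity) (by linarith [(m.cast_nonneg : (0 : ℝ) ≤ m)]),
      ← ENNReal.ofReal_mul (hbinom m), ← mul_assoc (beta c q * _),
      ← poch_mul_beta_mul_F21_one ha hb hq h, mul_right_comm]
  · exact fun m => by fun_prop
  · rintro x ⟨hx0, hx1⟩ m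
    have := sub_pos.2 hx1
    have := F21_nonneg ha hb hc hx0.le
    have := hbinom m
    positivity
  · rintro x ⟨hx0, hx1⟩
    have hx1' := sub_pos.2 hx1
    have hvx : |v * (1 - x)| < 1 := by
      rw [abs_of_pos (mul_pos hv.1 hx1')]
      linarith [one_sub_mul_one_sub_pos hv hx0]
    refine ((hasSum_poch_div_factorial_mul_pow (c + q - a) hvx).mul_left
      (x ^ (c - 1) * (1 - x) ^ (q - 1) * F21 a b c x)).congr_fun fun m => ?_
    rw [add_sub_right_comm q, rpow_add hx1', rpow_natCast, mul_pow]
    ring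

end IntegralTransforms

/-- The density of `bhMeasure a a' b` on `(0, 1)` without its normalizing constant. -/
noncomputable def bhWeight (a a' b x : ℝ) : ℝ :=
  x ^ (a - 1) * (1 - x) ^ (b - 1) * F21 a b (a + a') x

/-- The measure with density `bhWeight a a' b` on `(0, 1)`, of which `bhMeasure a a' b` is the
normalization. -/
noncomputable def bhWeightMeasure (a a' b : ℝ) : Measure ℝ :=
  (volume.restrict (Ioo 0 1)).withDensity fun x => ENNReal.ofReal (bhWeight a a' b x)

/-- The density at `v ∈ (0, 1)` of `1 / (1 + x * W)` for fixed `x > 0` and `W` with law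
`beta2 p q`. -/
noncomputable def beta2Kernel (p q x v : ℝ) : ℝ :=
  (beta p q)⁻¹ * (v ^ (q - 1) * (1 - v) ^ (p - 1)) * (x ^ q * (1 - v * (1 - x)) ^ (-(p + q)))

@[fun_prop]
lemma measurable_bhWeight (a a' b : ℝ) : Measurable (bhWeight a a' b) := by
  unfold bhWeight
  fun_prop

@[fun_prop]
lemma measurable_beta2Kernel (p q : ℝ) :
    Measurable fun z : ℝ × ℝ => beta2Kernel p q z.1 z.2 := by
  unfold beta2Kernel
  fun_prop

section BetaHypergeometric

variable {a a' b : ℝ}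

lemma bhWeight_nonneg (ha : 0 < a) (ha' : 0 < a') (hb : 0 < b) {x : ℝ} (hx : x ∈ Ioo (0 : ℝ) 1) :
    0 ≤ bhWeight a a' b x :=
  mul_nonneg (mul_nonneg (rpow_nonneg hx.1.le _) (rpow_nonneg (sub_pos.2 hx.2).le _))
    (F21_nonneg ha hb (by positivity) hx.1.le)

lemma lintegral_bhWeight_mul_beta2Kernel (ha : 0 < a) (ha' : 0 < a') (hb : 0 < b) {v : ℝ}
    (hv : v ∈ Ioo (0 : ℝ) 1) :
    ∫⁻ x in Ioo (0 : ℝ) 1, ENNReal.ofReal (bhWeight a a' b x * beta2Kernel b a' x v) =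
      ENNReal.ofReal (bhWeight a' a b v) := by
  have hB := beta_pos hb ha'
  have hconst : 0 ≤ (beta b a')⁻¹ * (v ^ (a' - 1) * (1 - v) ^ (b - 1)) := by
    have := hv.1
    have := sub_pos.2 hv.2
    positivity
  have hfactor : ∀ x ∈ Ioo (0 : ℝ) 1, bhWeight a a' b x * beta2Kernel b a' x v =
      (beta b a')⁻¹ * (v ^ (a' - 1) * (1 - v) ^ (b - 1)) *
        (x ^ (a + a' - 1) * (1 - x) ^ (b - 1) * F21 a b (a + a') x *
          (1 - v * (1 - x)) ^ (-(a + a' + b - a))) := by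
    intro x hx
    rw [bhWeight, beta2Kernel, show a + a' - 1 = a - 1 + a' by ring, rpow_add hx.1,
      show a + a' + b - a = b + a' by ring]
    ring
  have hgauss : beta (a + a') b * F21 a b (a + a' + b) 1 = beta b a' := by
    have hac := (Gamma_pos_of_pos (add_pos ha ha')).ne'
    have habc := (Gamma_pos_of_pos (add_pos (add_pos ha ha') hb)).ne'
    rw [F21_one ha hb (by linarith), beta, beta, show a + a' + b - a - b = a' by ring,
      show a + a' + b - a = b + a' by ring, add_sub_cancel_right]
    field_simp
  rw [setLIntegral_congr_fun measurableSet_Ioo fun x hx => by rw [hfactor x hx]]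
  simp_rw [ENNReal.ofReal_mul hconst]
  rw [lintegral_const_mul _ (by fun_prop), lintegral_rpow_mul_one_sub_rpow_mul_F21_mul_rpow ha hb
    (by positivity) hb (by linarith) hv, hgauss, ← ENNReal.ofReal_mul hconst, bhWeight,
    show a + a' + b - a - b = a' by ring, add_sub_cancel_right, F21_comm b, add_comm a a']
  congr 1
  field_simp

/-- Near `0` the `₂F₁` factor is bounded; away from `0`, trading `x ^ (a - 1)` for
`x ^ (a + a' - 1)` costs a bounded factor and makes Gauss's theorem applicable. -/
lemma bhWeight_le (ha : 0 < a) (ha' : 0 < a') (hb : 0 < b) {x : ℝ} (hx : x ∈ Ioo (0 : ℝ) 1) :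
    bhWeight a a' b x ≤
      F21 a b (a + a') (1 / 2) * (x ^ (a - 1) * (1 - x) ^ (b - 1)) +
        2 ^ a' * (x ^ (a + a' - 1) * (1 - x) ^ (b - 1) * F21 a b (a + a') x) := by
  have hc : 0 < a + a' := by positivity
  have hx0 := hx.1
  have := sub_pos.2 hx.2
  have hF := F21_nonneg ha hb hc hx0.le
  have hF2 := F21_nonneg ha hb hc one_half_pos.le
  rcases le_total x (1 / 2) with hx2 | hx2
  · have hmono := monotoneOn_F21 ha hb hc ⟨hx0.le, hx.2⟩ ⟨by norm_num, by norm_num⟩ hx2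
    refine le_add_of_le_of_nonneg ?_ (by positivity)
    rw [bhWeight, mul_comm (F21 _ _ _ _)]
    gcongr
  · have hpow : 1 ≤ (2 * x) ^ a' := one_le_rpow (by linarith) ha'.le
    refine le_add_of_nonneg_of_le (by positivity) ?_
    calc bhWeight a a' b x ≤ (2 * x) ^ a' * bhWeight a a' b x :=
          le_mul_of_one_le_left (bhWeight_nonneg ha ha' hb hx) hpow
      _ = _ := by
          rw [bhWeight, mul_rpow zero_le_two hx0.le, add_sub_right_comm, rpow_add hx0]
          ring

lemma lintegral_bhWeight_lt_top (ha : 0 < a) (ha' : 0 < a') (hb : 0 < b) :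
    ∫⁻ x in Ioo (0 : ℝ) 1, ENNReal.ofReal (bhWeight a a' b x) < ⊤ := by
  have hc : 0 < a + a' := by positivity
  calc ∫⁻ x in Ioo (0 : ℝ) 1, ENNReal.ofReal (bhWeight a a' b x)
    _ ≤ ∫⁻ x in Ioo (0 : ℝ) 1,
          (ENNReal.ofReal (F21 a b (a + a') (1 / 2)) *
              ENNReal.ofReal (x ^ (a - 1) * (1 - x) ^ (b - 1)) +
            ENNReal.ofReal (2 ^ a') *
              ENNReal.ofReal (x ^ (a + a' - 1) * (1 - x) ^ (b - 1) * F21 a b (a + a') x)) := by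
        refine setLIntegral_mono' measurableSet_Ioo fun x hx => ?_
        rw [← ENNReal.ofReal_mul (F21_nonneg ha hb hc one_half_pos.le),
          ← ENNReal.ofReal_mul (by positivity)]
        exact (ENNReal.ofReal_le_ofReal (bhWeight_le ha ha' hb hx)).trans ENNReal.ofReal_add_le
    _ < ⊤ := by
        rw [lintegral_add_left (by fun_prop), lintegral_const_mul _ (by fun_prop),
          lintegral_const_mul _ (by fun_prop), lintegral_rpow_mul_one_sub_rpow ha hb,
          lintegral_rpow_mul_one_sub_rpow_mul_F21 ha hb hc hb (by linarith)]
        simp only [← ENNReal.ofReal_mul' (beta_pos ha hb).le]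
        finiteness

lemma lintegral_bhWeight_eq_tsum (ha : 0 < a) (ha' : 0 < a') (hb : 0 < b) :
    ∫⁻ x in Ioo (0 : ℝ) 1, ENNReal.ofReal (bhWeight a a' b x) =
      ∑' n : ℕ, ENNReal.ofReal (beta a b * (poch a n * poch a n * poch b n /
        ((n.factorial : ℝ) * poch (a + b) n * poch (a + a') n))) := by
  have hc : 0 < a + a' := by positivity
  have hterm (n : ℕ) : beta a b * (poch a n * poch a n * poch b n /
      ((n.factorial : ℝ) * poch (a + b) n * poch (a + a') n)) =
        hypergeomCoeff a b (a + a') n * beta (a + n) b := by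
    rw [beta_add_natCast ha (by positivity), hypergeomCoeff]
    ring
  simp_rw [hterm]
  exact lintegral_rpow_mul_one_sub_rpow_mul_powerSeries ha hb
    (fun n => (hypergeomCoeff_pos ha hb hc n).le)
    fun x hx => hasSum_F21 ha hb hc (abs_lt.2 ⟨by linarith [hx.1], hx.2⟩)

lemma F32one_term_pos (ha : 0 < a) (ha' : 0 < a') (hb : 0 < b) (n : ℕ) :
    0 < poch a n * poch a n * poch b n /
      ((n.factorial : ℝ) * poch (a + b) n * poch (a + a') n) := by
  have := poch_pos ha n
  have := poch_pos hb n
  have := poch_pos (add_pos ha hb) n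
  have := poch_pos (add_pos ha ha') n
  positivity

lemma summable_F32one (ha : 0 < a) (ha' : 0 < a') (hb : 0 < b) :
    Summable fun n : ℕ => poch a n * poch a n * poch b n /
      ((n.factorial : ℝ) * poch (a + b) n * poch (a + a') n) := by
  have hB := beta_pos ha hb
  have hfinite := (lintegral_bhWeight_lt_top ha ha' hb).ne
  rw [lintegral_bhWeight_eq_tsum ha ha' hb] at hfinite
  exact (summable_mul_left_iff hB.ne').1 ((ENNReal.summable_toReal hfinite).congr fun n =>
    ENNReal.toReal_ofReal (mul_pos hB (F32one_term_pos ha ha' hb n)).le)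

lemma F32one_pos (ha : 0 < a) (ha' : 0 < a') (hb : 0 < b) :
    0 < F32one a a b (a + b) (a + a') :=
  (summable_F32one ha ha' hb).tsum_pos (fun n => (F32one_term_pos ha ha' hb n).le) 0
    (F32one_term_pos ha ha' hb 0)

lemma lintegral_bhWeight (ha : 0 < a) (ha' : 0 < a') (hb : 0 < b) :
    ∫⁻ x in Ioo (0 : ℝ) 1, ENNReal.ofReal (bhWeight a a' b x) =
      ENNReal.ofReal (beta a b * F32one a a b (a + b) (a + a')) := by
  have hB := beta_pos ha hb
  rw [lintegral_bhWeight_eq_tsum ha ha' hb, ← ENNReal.ofReal_tsum_of_nonneg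
    (fun n => (mul_pos hB (F32one_term_pos ha ha' hb n)).le)
    ((summable_F32one ha ha' hb).mul_left _), tsum_mul_left, F32one]

lemma bhWeightMeasure_univ :
    bhWeightMeasure a a' b univ = ∫⁻ x in Ioo (0 : ℝ) 1, ENNReal.ofReal (bhWeight a a' b x) := by
  rw [bhWeightMeasure, withDensity_apply _ MeasurableSet.univ, Measure.restrict_univ]

lemma ofReal_Cbh (ha : 0 < a) (ha' : 0 < a') (hb : 0 < b) :
    ENNReal.ofReal (Cbh a a' b) = (bhWeightMeasure a a' b univ)⁻¹ := by
  have hCbh : Cbh a a' b = (beta a b * F32one a a b (a + b) (a + a'))⁻¹ := by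
    rw [Cbh, beta, div_mul_eq_mul_div, inv_div]
  rw [bhWeightMeasure_univ, lintegral_bhWeight ha ha' hb, hCbh,
    ENNReal.ofReal_inv_of_pos (mul_pos (beta_pos ha hb) (F32one_pos ha ha' hb))]

lemma bhMeasure_eq_smul (ha : 0 < a) (ha' : 0 < a') (hb : 0 < b) :
    bhMeasure a a' b = (bhWeightMeasure a a' b univ)⁻¹ • bhWeightMeasure a a' b := by
  rw [← ofReal_Cbh ha ha' hb, bhWeightMeasure, ← withDensity_smul _ (by fun_prop),
    ← withDensity_indicator measurableSet_Ioo, bhMeasure]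
  congr 1 with x
  by_cases hx : x ∈ Ioo (0 : ℝ) 1
  · rw [bhDens, if_pos (mem_Ioo.1 hx), indicator_of_mem hx, Pi.smul_apply, smul_eq_mul,
      ← ENNReal.ofReal_mul' (bhWeight_nonneg ha ha' hb hx), bhWeight]
    simp only [mul_assoc]
  · rw [bhDens, if_neg (mt mem_Ioo.2 hx), indicator_of_notMem hx, ENNReal.ofReal_zero]

end BetaHypergeometric

section ChangeOfVariables

variable {p q x : ℝ}

lemma image_one_sub_div_mul_Ioo (hx : 0 < x) :
    (fun v : ℝ => (1 - v) / (v * x)) '' Ioo 0 1 = Ioi 0 := by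
  ext w
  constructor
  · rintro ⟨v, ⟨hv0, hv1⟩, rfl⟩
    exact div_pos (sub_pos.2 hv1) (mul_pos hv0 hx)
  · intro (hw : 0 < w)
    refine ⟨1 / (1 + x * w), ⟨by positivity, ?_⟩, ?_⟩
    · rw [div_lt_one (by positivity)]
      linarith [mul_pos hx hw]
    · field_simp
      ring

lemma injOn_one_sub_div_mul (hx : 0 < x) :
    InjOn (fun v : ℝ => (1 - v) / (v * x)) (Ioo 0 1) := by
  intro u hu v hv (huv : (1 - u) / (u * x) = (1 - v) / (v * x))
  have hu0 := hu.1
  have hv0 := hv.1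
  field_simp at huv
  linarith

lemma hasDerivAt_one_sub_div_mul (hx : x ≠ 0) {v : ℝ} (hv : v ≠ 0) :
    HasDerivAt (fun v : ℝ => (1 - v) / (v * x)) (-(1 / (v ^ 2 * x))) v := by
  refine (((hasDerivAt_id v).const_sub 1).div ((hasDerivAt_id v).mul_const x)
    (mul_ne_zero hv hx)).congr_deriv ?_
  simp only [id]
  field_simp
  ring

lemma lintegral_Ioi_eq_lintegral_Ioo_one_sub_div_mul (hx : 0 < x) (g : ℝ → ENNReal) :
    ∫⁻ w in Ioi 0, g w =
      ∫⁻ v in Ioo 0 1, ENNReal.ofReal (1 / (v ^ 2 * x)) * g ((1 - v) / (v * x)) := by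
  rw [← image_one_sub_div_mul_Ioo hx, lintegral_image_eq_lintegral_abs_deriv_mul measurableSet_Ioo
    (fun v hv => (hasDerivAt_one_sub_div_mul hx.ne' hv.1.ne').hasDerivWithinAt)
    (injOn_one_sub_div_mul hx)]
  refine setLIntegral_congr_fun measurableSet_Ioo fun v hv => ?_
  have := hv.1
  rw [abs_neg, abs_of_pos (by positivity)]

lemma beta2_eq_withDensity_restrict_Ioi (p q : ℝ) :
    beta2 p q = (volume.restrict (Ioi 0)).withDensity fun y =>
      ENNReal.ofReal ((beta p q)⁻¹ * y ^ (p - 1) * (1 + y) ^ (-(p + q))) := by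
  rw [← withDensity_indicator measurableSet_Ioi, beta2]
  congr 1 with y
  by_cases hy : y ∈ Ioi (0 : ℝ)
  · rw [beta2Dens, if_pos (mem_Ioi.1 hy), indicator_of_mem hy, beta, inv_div]
  · rw [beta2Dens, if_neg (mt mem_Ioi.2 hy), indicator_of_notMem hy, ENNReal.ofReal_zero]

lemma mul_beta2_density_eq_beta2Kernel (p q : ℝ) (hx : 0 < x) {v : ℝ} (hv : v ∈ Ioo (0 : ℝ) 1) :
    1 / (v ^ 2 * x) * ((beta p q)⁻¹ * ((1 - v) / (v * x)) ^ (p - 1) *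
      (1 + (1 - v) / (v * x)) ^ (-(p + q))) = beta2Kernel p q x v := by
  have hv0 := hv.1
  have hv1 := (sub_pos.2 hv.2).le
  have hvx := (one_sub_mul_one_sub_pos hv hx).le
  have := rpow_pos_of_pos hv0 p
  have := rpow_pos_of_pos hx p
  have hone_add : 1 + (1 - v) / (v * x) = (1 - v * (1 - x)) / (v * x) := by
    field_simp
    ring
  rw [beta2Kernel, hone_add, div_rpow hv1 (by positivity), div_rpow hvx (by positivity),
    mul_rpow hv0.le hx.le, mul_rpow hv0.le hx.le, rpow_neg hv0.le, rpow_neg hx.le, rpow_add hv0,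
    rpow_add hx, rpow_sub_one hv0.ne', rpow_sub_one hv0.ne', rpow_sub_one hx.ne']
  field_simp

theorem lintegral_beta2_comp_one_div_one_add_mul (p q : ℝ) (hx : 0 < x) {f : ℝ → ENNReal}
    (hf : Measurable f) :
    ∫⁻ w, f (1 / (1 + x * w)) ∂(beta2 p q) =
      ∫⁻ v in Ioo (0 : ℝ) 1, ENNReal.ofReal (beta2Kernel p q x v) * f v := by
  rw [beta2_eq_withDensity_restrict_Ioi, lintegral_withDensity_eq_lintegral_mul _ (by fun_prop)
    (by fun_prop), lintegral_Ioi_eq_lintegral_Ioo_one_sub_div_mul hx]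
  refine setLIntegral_congr_fun measurableSet_Ioo fun v hv => ?_
  have hv0 := hv.1
  have hinv : 1 / (1 + x * ((1 - v) / (v * x))) = v := by
    field_simp
    ring
  rw [Pi.mul_apply, hinv, ← mul_assoc, ← ENNReal.ofReal_mul (by positivity),
    mul_beta2_density_eq_beta2Kernel p q hx hv]

lemma isProbabilityMeasure_beta2 (hp : 0 < p) (hq : 0 < q) : IsProbabilityMeasure (beta2 p q) := by
  have hB := beta_pos hp hq
  constructor
  rw [← lintegral_one,
    lintegral_beta2_comp_one_div_one_add_mul p q one_pos (measurable_const (a := (1 : ENNReal)))]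
  simp only [beta2Kernel, sub_self, mul_zero, sub_zero, one_rpow, mul_one,
    ENNReal.ofReal_mul (inv_pos.2 hB).le]
  rw [lintegral_const_mul _ (by fun_prop), lintegral_rpow_mul_one_sub_rpow hq hp, beta_comm q p,
    ← ENNReal.ofReal_mul (inv_pos.2 hB).le, inv_mul_cancel₀ hB.ne', ENNReal.ofReal_one]

end ChangeOfVariables

section ProductLaw

variable {a a' b : ℝ}

lemma lintegral_bhWeightMeasure {f : ℝ → ENNReal} (hf : Measurable f) :
    ∫⁻ x, f x ∂(bhWeightMeasure a a' b) =
      ∫⁻ x in Ioo (0 : ℝ) 1, ENNReal.ofReal (bhWeight a a' b x) * f x := by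
  rw [bhWeightMeasure, lintegral_withDensity_eq_lintegral_mul _ (by fun_prop) hf]
  rfl

theorem map_prod_bhWeightMeasure_beta2 (ha : 0 < a) (ha' : 0 < a') (hb : 0 < b) :
    ((bhWeightMeasure a a' b).prod (beta2 b a')).map (fun z => 1 / (1 + z.1 * z.2)) =
      bhWeightMeasure a' a b := by
  have := isProbabilityMeasure_beta2 hb ha'
  refine Measure.ext_of_lintegral _ fun f hf => ?_
  have hg : Measurable fun z : ℝ × ℝ => f (1 / (1 + z.1 * z.2)) := by fun_prop
  calc ∫⁻ v, f v ∂((bhWeightMeasure a a' b).prod (beta2 b a')).map (fun z => 1 / (1 + z.1 * z.2))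
    _ = ∫⁻ x in Ioo (0 : ℝ) 1, ENNReal.ofReal (bhWeight a a' b x) *
          ∫⁻ w, f (1 / (1 + x * w)) ∂(beta2 b a') := by
        rw [lintegral_map hf (by fun_prop), lintegral_prod _ hg.aemeasurable,
          lintegral_bhWeightMeasure hg.lintegral_prod_right']
    _ = ∫⁻ x in Ioo (0 : ℝ) 1, ∫⁻ v in Ioo (0 : ℝ) 1,
          ENNReal.ofReal (bhWeight a a' b x * beta2Kernel b a' x v) * f v := by
        refine setLIntegral_congr_fun measurableSet_Ioo fun x hx => ?_
        rw [lintegral_beta2_comp_one_div_one_add_mul b a' hx.1 hf,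
          ← lintegral_const_mul _ (by fun_prop)]
        simp only [ENNReal.ofReal_mul (bhWeight_nonneg ha ha' hb hx), mul_assoc]
    _ = ∫⁻ v in Ioo (0 : ℝ) 1, (∫⁻ x in Ioo (0 : ℝ) 1,
          ENNReal.ofReal (bhWeight a a' b x * beta2Kernel b a' x v)) * f v := by
        rw [lintegral_lintegral_swap (by fun_prop)]
        exact lintegral_congr fun v => lintegral_mul_const _ (by fun_prop)
    _ = ∫⁻ v, f v ∂(bhWeightMeasure a' a b) := by
        rw [lintegral_bhWeightMeasure hf]
        refine setLIntegral_congr_fun measurableSet_Ioo fun v hv => ?_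
        rw [lintegral_bhWeight_mul_beta2Kernel ha ha' hb hv]

lemma bhWeightMeasure_univ_comm (ha : 0 < a) (ha' : 0 < a') (hb : 0 < b) :
    bhWeightMeasure a a' b univ = bhWeightMeasure a' a b univ := by
  have := isProbabilityMeasure_beta2 hb ha'
  rw [← map_prod_bhWeightMeasure_beta2 ha ha' hb,
    Measure.map_apply (by fun_prop) MeasurableSet.univ, preimage_univ, ← univ_prod_univ,
    Measure.prod_prod, measure_univ (μ := beta2 b a'), mul_one]

theorem map_prod_bhMeasure_beta2 (ha : 0 < a) (ha' : 0 < a') (hb : 0 < b) :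
    ((bhMeasure a a' b).prod (beta2 b a')).map (fun z => 1 / (1 + z.1 * z.2)) =
      bhMeasure a' a b := by
  have := isProbabilityMeasure_beta2 hb ha'
  rw [bhMeasure_eq_smul ha ha' hb, Measure.prod_smul_left, Measure.map_smul,
    map_prod_bhWeightMeasure_beta2 ha ha' hb, bhWeightMeasure_univ_comm ha ha' hb,
    ← bhMeasure_eq_smul ha' ha hb]

end ProductLaw

theorem bh_main_theorem {Ω : Type*} [MeasurableSpace Ω] (μ : Measure Ω)
    [IsProbabilityMeasure μ] (X W : Ω → ℝ) (hX : Measurable X) (hW : Measurable W)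
    (a a' b : ℝ) (ha : 0 < a) (ha' : 0 < a') (hb : 0 < b)
    (hInd : IndepFun X W μ)
    (hXlaw : μ.map X = bhMeasure a a' b) (hWlaw : μ.map W = beta2 b a') :
    μ.map (fun ω => 1 / (1 + X ω * W ω)) = bhMeasure a' a b := by
  have hjoint : μ.map (fun ω => (X ω, W ω)) = (bhMeasure a a' b).prod (beta2 b a') := by
    rw [(indepFun_iff_map_prod_eq_prod_map_map hX.aemeasurable hW.aemeasurable).1 hInd, hXlaw,
      hWlaw]
  rw [← map_prod_bhMeasure_beta2 ha ha' hb, ← hjoint, Measure.map_map (by fun_prop) (by fun_prop)]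
  rfl
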